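/- arXiv:1404.6939 — 2 statements merged into one kernel-verified Lean document; each statement's English description precedes it below -/
import Mathlib

section
/- Let (V,π) be a complete discrete valuation ring of characteristic zero whose residue field k = V/(π) is algebraically closed of characteristic p > 0, and let G ⊆ GL₂(V) be a finite subgroup with p ∤ |G| having no pseudo-reflections except the identity, acting linearly on S = V[[x₁,x₂]]. Let θ = π − g where g ∈ (x₁,x₂)² ∩ S^G (g = 0 allowed). Then for all L₁, L₂ ∈ add_{S^G}(S), the element θ is a non-zerodivisor on Ext¹_{S^G}(L₁, L₂). -/
/-- The subring of invariants `R^G` of a ring `R` under an action of a group `G`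
by ring automorphisms. -/
def fixedSubring (G R : Type*) [Group G] [CommRing R] [MulSemiringAction G R] :
    Subring R where
  carrier := {x | ∀ σ : G, σ • x = x}
  mul_mem' := by intro a b ha hb σ; rw [smul_mul', ha σ, hb σ]
  one_mem' := by intro σ; exact smul_one σ
  add_mem' := by intro a b ha hb σ; rw [smul_add, ha σ, hb σ]
  zero_mem' := by intro σ; exact smul_zero σ
  neg_mem' := by intro a ha σ; rw [smul_neg, ha σ]


/-- `M ∈ add_A(S)`: `M` is (isomorphic to) a direct summand of a finite direct sum of
copies of `S`, as an `A`-module. -/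
def MemAdd (A : Type*) [CommRing A] (S : Type*) [AddCommGroup S] [Module A S]
    (M : Type*) [AddCommGroup M] [Module A M] : Prop :=
  ∃ (n : ℕ) (N N' : Submodule A (Fin n → S)), IsCompl N N' ∧ Nonempty (M ≃ₗ[A] N)

open MvPowerSeries IsLocalRing CategoryTheory

lemma aux_not_rank {K : Type*} [Field K] (M : Matrix (Fin 2) (Fin 2) K) (h : ¬ M.rank ≤ 1) : M.det ≠ 0 := by
  intro h0
  apply h
  obtain ⟨v, hv, hv0⟩ := Matrix.exists_mulVec_eq_zero_iff.mpr h0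
  have h1 := LinearMap.finrank_range_add_finrank_ker M.mulVecLin
  have h2 : 0 < Module.finrank K (LinearMap.ker M.mulVecLin) := by
    rw [Module.finrank_pos_iff_exists_ne_zero]
    exact ⟨⟨v, by simpa using hv0⟩, by simpa [Subtype.ext_iff] using hv⟩
  simp at h1
  unfold Matrix.rank
  omega

open MvPowerSeries in
lemma aux_decomp {V : Type*} [CommRing V] (e : MvPowerSeries (Fin 2) V)
    (he : constantCoeff e = 0) :
    ∃ a b, e = X 0 * a + X 1 * b := by
  classical
  set e' : MvPowerSeries (Fin 2) V := fun m => if m 0 = 0 then coeff m e else 0 with he'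
  have hc : ∀ m, coeff m e' = if m 0 = 0 then coeff m e else 0 := fun m => rfl
  have h0 : (X 0 : MvPowerSeries (Fin 2) V) ∣ e - e' := by
    rw [X_dvd_iff]
    intro m hm
    simp [hc, hm]
  have h1 : (X 1 : MvPowerSeries (Fin 2) V) ∣ e' := by
    rw [X_dvd_iff]
    intro m hm
    rw [hc]
    split_ifs with h
    · have : m = 0 := by ext i; fin_cases i <;> simp [h, hm]
      rw [this]; simpa using he
    · rfl
  obtain ⟨a, ha⟩ := h0
  obtain ⟨b, hb⟩ := h1
  exact ⟨a, b, by rw [← ha, ← hb]; ring⟩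

open MvPowerSeries in
lemma aux_X01 {V : Type*} [CommRing V] (f : MvPowerSeries (Fin 2) V)
    (h : (X 0 : MvPowerSeries (Fin 2) V) ∣ X 1 * f) :
    (X 0 : MvPowerSeries (Fin 2) V) ∣ f := by
  rw [X_dvd_iff] at h ⊢
  intro m hm
  have := h (Finsupp.single 1 1 + m) (by simp [hm])
  rwa [X, coeff_add_monomial_mul, one_mul] at this


open MvPowerSeries in
lemma aux_X_prime {V : Type*} [CommRing V] [IsDomain V] (e f : MvPowerSeries (Fin 2) V)
    (h : (X 0 : MvPowerSeries (Fin 2) V) ∣ e * f) (he : constantCoeff e ≠ 0) :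
    (X 0 : MvPowerSeries (Fin 2) V) ∣ f := by
  classical
  let tr : MvPowerSeries (Fin 2) V → MvPowerSeries (Fin 2) V :=
    fun e m => if m 0 = 0 then coeff m e else 0
  have hc : ∀ e m, coeff m (tr e) = if m 0 = 0 then coeff m e else 0 := fun e m => rfl
  have h0 : ∀ e, (X 0 : MvPowerSeries (Fin 2) V) ∣ e - tr e := by
    intro e
    rw [X_dvd_iff]
    intro m hm
    simp [hc, hm]
  have h1 : (X 0 : MvPowerSeries (Fin 2) V) ∣ tr e * tr f := by
    have : tr e * tr f = e * f - ((e - tr e) * f + tr e * (f - tr f)) := by ring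
    rw [this]
    exact dvd_sub h (dvd_add ((h0 e).mul_right _) ((h0 f).mul_left _))
  have h2 : tr e * tr f = 0 := by
    ext m
    by_cases hm : m 0 = 0
    · exact X_dvd_iff.1 h1 m hm
    · rw [coeff_mul, map_zero]
      apply Finset.sum_eq_zero
      intro q hq
      rw [Finset.HasAntidiagonal.mem_antidiagonal] at hq
      rw [hc, hc]
      by_cases h1 : q.1 0 = 0
      · have : q.2 0 ≠ 0 := by
          intro h2; apply hm; rw [← hq]; simp [h1, h2]
        simp [this]
      · simp [h1]
  rcases mul_eq_zero.1 h2 with h3 | h3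
  · exfalso; apply he
    have := hc e 0
    rw [h3] at this
    simpa using this.symm
  · simpa [h3] using h0 f

open CategoryTheory in
lemma aux_sc {R : Type*} [CommRing R] (S : ShortComplex (ModuleCat.{0} R)) (r : R)
    (h : ∀ f : S.X₂, S.g f = 0 → (∃ u : S.X₁, S.f u = r • f) → ∃ u : S.X₁, S.f u = f) :
    ∀ x : S.homology, r • x = 0 → x = 0 := by
  intro x hx
  have hi : Function.Injective S.moduleCatHomologyIso.hom :=
    (ModuleCat.mono_iff_injective _).1 inferInstance
  apply hi
  rw [map_zero]
  have h1 : r • S.moduleCatHomologyIso.hom x = 0 := by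
    rw [← map_smul, hx, map_zero]
  revert h1
  generalize S.moduleCatHomologyIso.hom x = y
  change (LinearMap.ker S.g.hom ⧸ LinearMap.range S.moduleCatToCycles) at y
  obtain ⟨z, rfl⟩ := Submodule.Quotient.mk_surjective _ y
  intro h1
  have h2 : r • z ∈ LinearMap.range S.moduleCatToCycles := 
    (Submodule.Quotient.mk_eq_zero _).1 h1
  obtain ⟨u, hu⟩ := h2
  obtain ⟨w, hw⟩ := h z.1 z.2 ⟨u, congrArg Subtype.val hu⟩
  exact (Submodule.Quotient.mk_eq_zero _).2 ⟨w, Subtype.ext hw⟩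

open CategoryTheory in
lemma aux_ext {R : Type} [CommRing R] (θ : R) (L₁ L₂ : Type) [AddCommGroup L₁] [AddCommGroup L₂]
    [Module R L₁] [Module R L₂] (hreg : ∀ y : L₂, θ • y = 0 → y = 0)
    (hlift : ∀ φ : L₁ →ₗ[R] L₂ ⧸ LinearMap.range (LinearMap.lsmul R L₂ θ),
      ∃ ψ : L₁ →ₗ[R] L₂, ∀ x, Submodule.Quotient.mk (ψ x) = φ x) :
    ∀ x : ((Ext R (ModuleCat R) 1).obj (Opposite.op (ModuleCat.of R L₁))).obj (ModuleCat.of R L₂),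
      θ • x = 0 → x = 0 := by
  intro x hx
  let P := projectiveResolution (ModuleCat.of R L₁)
  let e := P.isoExt (R := R) 1 (ModuleCat.of R L₂)
  have hi : Function.Injective e.hom := (ModuleCat.mono_iff_injective _).1 inferInstance
  apply hi
  rw [map_zero]
  have h1 : θ • e.hom x = 0 := by
    rw [← map_smul, hx, map_zero]
  revert h1
  generalize e.hom x = y
  revert y
  let K := P.complex.linearYonedaObj R (ModuleCat.of R L₂)
  let e2 := (K.homologyIsoSc' 0 1 2 (by simp) (by simp))
  have hi2 : Function.Injective e2.hom := (ModuleCat.mono_iff_injective _).1 inferInstance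
  suffices H : ∀ y : (K.sc' 0 1 2).homology, θ • y = 0 → y = 0 by
    intro y hy
    apply hi2
    rw [map_zero]
    apply H
    rw [← map_smul, hy, map_zero]
  apply aux_sc
  intro f hf hu
  obtain ⟨u, hu⟩ := hu
  change (P.complex.X 1 ⟶ ModuleCat.of R L₂) at f
  change (P.complex.X 0 ⟶ ModuleCat.of R L₂) at u
  change P.complex.d 1 0 ≫ u = θ • f at hu
  change ∃ w : (P.complex.X 0 ⟶ ModuleCat.of R L₂), P.complex.d 1 0 ≫ w = f
  clear hf
  have hex := P.exact₀
  rw [ShortComplex.moduleCat_exact_iff] at hex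
  have hsurj : Function.Surjective (P.π.f 0).hom := 
    (ModuleCat.epi_iff_surjective (P.π.f 0)).1 inferInstance
  let ε : P.complex.X 0 →ₗ[R] L₁ := (P.π.f 0).hom
  have hε : Function.Surjective ε := hsurj
  have hεd : ∀ z, ε z = 0 → ∃ w, (P.complex.d 1 0).hom w = z := fun z hz => hex z hz
  have hεd' : ∀ w, ε ((P.complex.d 1 0).hom w) = 0 := fun w => 
    congrArg (fun k => k.hom w) P.complex_d_comp_π_f_zero
  let q := (LinearMap.range (LinearMap.lsmul R L₂ θ)).mkQ
  have hu' : ∀ w, u.hom ((P.complex.d 1 0).hom w) = θ • f.hom w := fun w => congrArg (fun k => k.hom w) hu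
  have hker : LinearMap.ker ε ≤ LinearMap.ker (q ∘ₗ u.hom) := by
    intro z hz
    obtain ⟨w, rfl⟩ := hεd z hz
    rw [LinearMap.mem_ker, LinearMap.comp_apply, hu']
    exact (Submodule.Quotient.mk_eq_zero _).2 ⟨f.hom w, rfl⟩
  let φ : L₁ →ₗ[R] L₂ ⧸ LinearMap.range (LinearMap.lsmul R L₂ θ) :=
    (LinearMap.ker ε).liftQ (q ∘ₗ u.hom) hker ∘ₗ (ε.quotKerEquivOfSurjective hε).symm.toLinearMap
  have hφ : ∀ z, φ (ε z) = q (u.hom z) := by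
    intro z
    have : (ε.quotKerEquivOfSurjective hε).symm (ε z) = Submodule.Quotient.mk z := by
      rw [LinearEquiv.symm_apply_eq]; rfl
    simp only [φ, LinearMap.comp_apply, LinearEquiv.coe_coe, this]
    rfl
  obtain ⟨ψ, hψ⟩ := hlift φ
  let m : L₂ →ₗ[R] L₂ := LinearMap.lsmul R L₂ θ
  have hm : Function.Injective m := (injective_iff_map_eq_zero m).2 hreg
  have hr : ∀ z, (u.hom - ψ ∘ₗ ε) z ∈ LinearMap.range m := by
    intro z
    rw [LinearMap.sub_apply, ← Submodule.Quotient.eq]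
    exact ((hψ (ε z)).trans (hφ z)).symm
  let w : P.complex.X 0 →ₗ[R] L₂ := (LinearEquiv.ofInjective m hm).symm.toLinearMap ∘ₗ 
    (u.hom - ψ ∘ₗ ε).codRestrict (LinearMap.range m) hr
  have hw : ∀ z, θ • w z = u.hom z - ψ (ε z) := by
    intro z
    have := LinearEquiv.apply_symm_apply (LinearEquiv.ofInjective m hm)
      ((u.hom - ψ ∘ₗ ε).codRestrict (LinearMap.range m) hr z)
    exact congrArg Subtype.val this
  refine ⟨ModuleCat.ofHom w, ?_⟩
  ext z
  change w ((P.complex.d 1 0).hom z) = f.hom z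
  rw [← sub_eq_zero]
  apply hreg
  rw [smul_sub, hw, hu', hεd', map_zero, sub_zero, sub_self]

lemma aux_core1 {G S T : Type*} [Group G] [Fintype G] [DecidableEq G] [CommRing S] [CommRing T]
    [MulSemiringAction G S] (q : S →+* T) (φ : S →+ T)
    (hφ : ∀ r ∈ fixedSubring G S, ∀ s, φ (r * s) = q r * φ s)
    {ι : Type*} [Fintype ι] (f : S) (hf : f ∈ fixedSubring G S) (a b : ι → S)
    (hab : ∀ τ : G, ∑ i, a i * τ • b i = if τ = 1 then f else 0) (s : S) :
    q f * φ s = ∑ τ : G, (∑ i, φ (a i) * q (τ • b i)) * q (τ • s) := by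
  have htr : ∀ x : S, (∑ τ : G, τ • x) ∈ fixedSubring G S := by
    intro x σ
    rw [Finset.smul_sum]
    simp_rw [smul_smul]
    exact Fintype.sum_equiv (Equiv.mulLeft σ) _ _ (fun _ => rfl)
  have h1 : f * s = ∑ i, (∑ τ : G, τ • (b i * s)) * a i := by
    simp_rw [Finset.sum_mul]
    rw [Finset.sum_comm]
    have : ∀ τ : G, ∑ i, τ • (b i * s) * a i = (if τ = 1 then f else 0) * τ • s := by
      intro τ
      rw [← hab, Finset.sum_mul]
      refine Finset.sum_congr rfl fun i _ => ?_
      rw [smul_mul']; ring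
    simp_rw [this]
    simp
  rw [← hφ f hf, h1, map_sum]
  simp_rw [fun i => hφ _ (htr (b i * s)) (a i), map_sum, Finset.sum_mul]
  rw [Finset.sum_comm]
  refine Finset.sum_congr rfl fun τ _ => Finset.sum_congr rfl fun i _ => ?_
  rw [smul_mul', map_mul]; ring

lemma aux_indep {G S T : Type*} [Group G] [Fintype G] [DecidableEq G] [CommRing S] [CommRing T]
    [MulSemiringAction G S] (q : S →+* T)
    {ι : Type*} [Fintype ι] (f : S) (hf : f ∈ fixedSubring G S) (a b : ι → S)
    (hab : ∀ τ : G, ∑ i, a i * τ • b i = if τ = 1 then f else 0)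
    (c : G → T) (hc : ∀ s, ∑ τ : G, c τ * q (τ • s) = 0) (σ : G) : q f * c σ = 0 := by
  have h1 : ∀ τ : G, ∑ i, σ • a i * τ • b i = if τ = σ then f else 0 := by
    intro τ
    have : ∑ i, σ • a i * τ • b i = σ • ∑ i, a i * (σ⁻¹ * τ) • b i := by
      rw [Finset.smul_sum]
      refine Finset.sum_congr rfl fun i _ => ?_
      rw [smul_mul', smul_smul, mul_inv_cancel_left]
    rw [this, hab]
    by_cases h : τ = σ
    · simp [h, hf σ]
    · rw [if_neg h, if_neg, smul_zero]
      rw [inv_mul_eq_one]; exact fun h' => h h'.symm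
  have h2 : ∑ i, q (σ • a i) * ∑ τ : G, c τ * q (τ • b i) = 0 := by
    simp [hc]
  simp_rw [Finset.mul_sum] at h2
  rw [Finset.sum_comm] at h2
  have h3 : ∀ τ : G, ∑ i, q (σ • a i) * (c τ * q (τ • b i)) =
      c τ * q (if τ = σ then f else 0) := by
    intro τ
    rw [← h1, map_sum, Finset.mul_sum]
    refine Finset.sum_congr rfl fun i _ => ?_
    rw [map_mul]; ring
  simp_rw [h3] at h2
  simp only [apply_ite q, map_zero, mul_ite, mul_zero, Finset.sum_ite_eq', Finset.mem_univ,
    if_true] at h2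
  rw [mul_comm]; exact h2

lemma aux_core {G S T : Type*} [Group G] [Fintype G] [DecidableEq G] [CommRing S] [CommRing T]
    [MulSemiringAction G S] (q : S →+* T) (φ : S →+ T)
    (hφ : ∀ r ∈ fixedSubring G S, ∀ s, φ (r * s) = q r * φ s)
    {ι : Type*} [Fintype ι] (f f' : S) (hf : f ∈ fixedSubring G S) (hf' : f' ∈ fixedSubring G S)
    (a b a' b' : ι → S)
    (hab : ∀ τ : G, ∑ i, a i * τ • b i = if τ = 1 then f else 0)
    (hab' : ∀ τ : G, ∑ i, a' i * τ • b' i = if τ = 1 then f' else 0)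
    (hreg : ∀ c, q f * c = 0 → c = 0)
    (hP : ∀ c, q f ∣ q f' * c → q f ∣ c) :
    ∃ t : G → T, ∀ s, φ s = ∑ τ : G, t τ * q (τ • s) := by
  have E1 := aux_core1 q φ hφ f hf a b hab
  have E2 := aux_core1 q φ hφ f' hf' a' b' hab'
  set t1 : G → T := fun τ => ∑ i, φ (a i) * q (τ • b i) with ht1
  set t2 : G → T := fun τ => ∑ i, φ (a' i) * q (τ • b' i) with ht2
  change ∀ s, _ = ∑ τ : G, t1 τ * _ at E1
  change ∀ s, _ = ∑ τ : G, t2 τ * _ at E2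
  have h : ∀ σ, q f' * t1 σ - q f * t2 σ = 0 := by
    intro σ
    apply hreg
    refine aux_indep q f hf a b hab (fun σ => q f' * t1 σ - q f * t2 σ) ?_ σ
    intro s
    simp_rw [sub_mul, Finset.sum_sub_distrib, mul_assoc, ← Finset.mul_sum]
    rw [← E1, ← E2]; ring
  have h2 : ∀ σ, q f ∣ t1 σ := fun σ => hP _ ⟨t2 σ, sub_eq_zero.1 (h σ)⟩
  choose t ht using h2
  refine ⟨t, fun s => ?_⟩
  rw [← sub_eq_zero]
  apply hreg
  rw [mul_sub, E1, Finset.mul_sum, sub_eq_zero]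
  refine Finset.sum_congr rfl fun τ _ => ?_
  rw [ht τ]; ring

/-- From the core statement to lifting. -/
lemma aux_liftS {G S : Type*} [Group G] [Fintype G] [DecidableEq G] [CommRing S]
    [MulSemiringAction G S] (θ : fixedSubring G S)
    {ι : Type*} [Fintype ι] (f f' : S) (hf : f ∈ fixedSubring G S) (hf' : f' ∈ fixedSubring G S)
    (a b a' b' : ι → S)
    (hab : ∀ τ : G, ∑ i, a i * τ • b i = if τ = 1 then f else 0)
    (hab' : ∀ τ : G, ∑ i, a' i * τ • b' i = if τ = 1 then f' else 0)
    (hreg : ∀ c, Ideal.Quotient.mk (Ideal.span {(θ : S)}) f * c = 0 → c = 0)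
    (hP : ∀ c, Ideal.Quotient.mk (Ideal.span {(θ : S)}) f ∣
      Ideal.Quotient.mk (Ideal.span {(θ : S)}) f' * c →
      Ideal.Quotient.mk (Ideal.span {(θ : S)}) f ∣ c)
    (φ : S →ₗ[fixedSubring G S]
      S ⧸ LinearMap.range (LinearMap.lsmul (fixedSubring G S) S θ)) :
    ∃ ψ : S →ₗ[fixedSubring G S] S, ∀ x, Submodule.Quotient.mk (ψ x) = φ x := by
  have hle : LinearMap.range (LinearMap.lsmul (fixedSubring G S) S θ) ≤
      LinearMap.ker ((Ideal.Quotient.mkₐ (fixedSubring G S) (Ideal.span {(θ : S)})).toLinearMap) := by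
    rintro _ ⟨y, rfl⟩
    rw [LinearMap.mem_ker]
    exact Ideal.Quotient.eq_zero_iff_mem.2 (Ideal.mem_span_singleton.2 ⟨y, rfl⟩)
  let e := (LinearMap.range (LinearMap.lsmul (fixedSubring G S) S θ)).liftQ _ hle
  have he : ∀ s, e (Submodule.Quotient.mk s) = Ideal.Quotient.mk (Ideal.span {(θ : S)}) s :=
    fun s => rfl
  have hinj : Function.Injective e := by
    rw [injective_iff_map_eq_zero]
    intro z hz
    obtain ⟨s, rfl⟩ := Submodule.Quotient.mk_surjective _ z
    rw [he, Ideal.Quotient.eq_zero_iff_mem, Ideal.mem_span_singleton] at hz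
    obtain ⟨y, hy⟩ := hz
    exact (Submodule.Quotient.mk_eq_zero _).2 ⟨y, hy.symm⟩
  obtain ⟨t, ht⟩ := aux_core (Ideal.Quotient.mk (Ideal.span {(θ : S)}))
    ((e ∘ₗ φ).toAddMonoidHom) (by
      intro r hr s
      have := (e ∘ₗ φ).map_smul ⟨r, hr⟩ s
      rw [Algebra.smul_def] at this
      exact this) f f' hf hf' a b a' b' hab hab' hreg hP
  choose u hu using fun τ => Ideal.Quotient.mk_surjective (t τ)
  refine ⟨{ toFun := fun s => ∑ τ : G, u τ * τ • s, map_add' := ?_, map_smul' := ?_ }, ?_⟩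
  · intro x y
    simp [smul_add, mul_add, Finset.sum_add_distrib]
  · intro r x
    simp only [RingHom.id_apply]
    rw [Finset.smul_sum]
    refine Finset.sum_congr rfl fun τ _ => ?_
    simp only [Subring.smul_def, smul_eq_mul, smul_mul', r.2 τ]; ring
  · intro x
    apply hinj
    rw [he]
    refine Eq.trans ?_ (ht x).symm
    simp [hu]

lemma aux_retract {A S : Type*} [CommRing A] [AddCommGroup S] [Module A S]
    {M : Type*} [AddCommGroup M] [Module A M] (h : MemAdd A S M) :
    ∃ (n : ℕ) (i : M →ₗ[A] (Fin n → S)) (p : (Fin n → S) →ₗ[A] M), ∀ x, p (i x) = x := by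
  obtain ⟨n, N, N', hc, ⟨e⟩⟩ := h
  refine ⟨n, N.subtype ∘ₗ e.toLinearMap, e.symm.toLinearMap ∘ₗ N.projectionOnto N' hc, ?_⟩
  intro x
  simp

lemma aux_lift {A S : Type*} [CommRing A] [AddCommGroup S] [Module A S] (θ : A)
    (hS : ∀ φ : S →ₗ[A] S ⧸ LinearMap.range (LinearMap.lsmul A S θ),
      ∃ ψ : S →ₗ[A] S, ∀ x, Submodule.Quotient.mk (ψ x) = φ x)
    {L₁ L₂ : Type*} [AddCommGroup L₁] [Module A L₁] [AddCommGroup L₂] [Module A L₂]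
    (h₁ : MemAdd A S L₁) (h₂ : MemAdd A S L₂)
    (φ : L₁ →ₗ[A] L₂ ⧸ LinearMap.range (LinearMap.lsmul A L₂ θ)) :
    ∃ ψ : L₁ →ₗ[A] L₂, ∀ x, Submodule.Quotient.mk (ψ x) = φ x := by
  obtain ⟨n, i₁, p₁, hp₁⟩ := aux_retract h₁
  obtain ⟨m, i₂, p₂, hp₂⟩ := aux_retract h₂
  -- functoriality of the quotient
  have hmap : ∀ (c : L₂ →ₗ[A] S), LinearMap.range (LinearMap.lsmul A L₂ θ) ≤
      (LinearMap.range (LinearMap.lsmul A S θ)).comap c := by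
    rintro c _ ⟨y, rfl⟩
    exact ⟨c y, by simp⟩
  let comp : Fin m → (L₂ →ₗ[A] S) := fun k => LinearMap.proj k ∘ₗ i₂
  have hΦ : ∀ (j : Fin n) (k : Fin m), ∃ ψ : S →ₗ[A] S, ∀ x, Submodule.Quotient.mk (ψ x) =
      Submodule.mapQ _ _ (comp k) (hmap (comp k)) (φ (p₁ (Pi.single j x))) := by
    intro j k
    exact hS (Submodule.mapQ _ _ (comp k) (hmap (comp k)) ∘ₗ φ ∘ₗ p₁ ∘ₗ LinearMap.single A (fun _ => S) j)
  choose Ψ hΨ using hΦ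
  let Φ : (Fin n → S) →ₗ[A] (Fin m → S) :=
    LinearMap.pi fun k => ∑ j, Ψ j k ∘ₗ LinearMap.proj j
  refine ⟨p₂ ∘ₗ Φ ∘ₗ i₁, fun x => ?_⟩
  obtain ⟨y, hy⟩ := Submodule.Quotient.mk_surjective _ (φ x)
  rw [← hy]
  have hk : ∀ k, ∃ z, θ • z = Φ (i₁ x) k - i₂ y k := by
    intro k
    have h1 : (Submodule.Quotient.mk (Φ (i₁ x) k) : S ⧸ LinearMap.range (LinearMap.lsmul A S θ)) =
        Submodule.Quotient.mk (i₂ y k) := by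
      have h2 : Φ (i₁ x) k = ∑ j, Ψ j k (i₁ x j) := by simp [Φ]
      have h3 : Submodule.mapQ _ _ (comp k) (hmap (comp k)) (φ x) =
        Submodule.Quotient.mk (i₂ y k) := by rw [← hy]; rfl
      rw [h2, ← h3, ← Submodule.mkQ_apply, map_sum]
      simp_rw [Submodule.mkQ_apply, hΨ, ← map_sum]
      rw [Finset.univ_sum_single, hp₁]
    rw [Submodule.Quotient.eq] at h1
    exact h1
  choose z hz using hk
  rw [Submodule.Quotient.eq]
  refine ⟨p₂ z, ?_⟩
  have : θ • z = Φ (i₁ x) - i₂ y := by ext k; exact hz k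
  simp only [LinearMap.lsmul_apply, LinearMap.comp_apply]
  rw [← map_smul, this, map_sub, hp₂]

lemma aux_dvd_right {T ι : Type*} [CommRing T] [Fintype ι] (a : T) (y : ι → T)
    (h : ∀ j c, a ∣ y j * c → a ∣ c) : ∀ c, a ∣ (∏ j, y j) * c → a ∣ c := by
  classical
  have : ∀ s : Finset ι, ∀ c, a ∣ (∏ j ∈ s, y j) * c → a ∣ c := by
    intro s
    induction s using Finset.induction_on with
    | empty => intro c hc; simpa using hc
    | insert j s hj ih =>
      intro c hc
      rw [Finset.prod_insert hj, mul_assoc] at hc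
      exact ih c (h j _ hc)
  exact this _

lemma aux_reg_prod {T ι : Type*} [CommRing T] [Fintype ι] (x : ι → T)
    (hr : ∀ j c, x j * c = 0 → c = 0) : ∀ c, (∏ j, x j) * c = 0 → c = 0 := by
  classical
  have : ∀ s : Finset ι, ∀ c, (∏ j ∈ s, x j) * c = 0 → c = 0 := by
    intro s
    induction s using Finset.induction_on with
    | empty => intro c hc; simpa using hc
    | insert j s hj ih =>
      intro c hc
      rw [Finset.prod_insert hj, mul_assoc] at hc
      exact ih c (hr j _ hc)
  exact this _

lemma aux_dvd_left {T ι : Type*} [CommRing T] [Fintype ι] (b : T) (x : ι → T)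
    (hr : ∀ j c, x j * c = 0 → c = 0)
    (h : ∀ j c, x j ∣ b * c → x j ∣ c) : ∀ c, (∏ j, x j) ∣ b * c → (∏ j, x j) ∣ c := by
  classical
  have : ∀ s : Finset ι, ∀ c, (∏ j ∈ s, x j) ∣ b * c → (∏ j ∈ s, x j) ∣ c := by
    intro s
    induction s using Finset.induction_on with
    | empty => intro c hc; simp
    | insert j s hj ih =>
      intro c hc
      rw [Finset.prod_insert hj] at hc ⊢
      obtain ⟨c', rfl⟩ := h j c ((Dvd.intro _ rfl).trans hc)
      apply mul_dvd_mul_left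
      apply ih
      obtain ⟨d, hd⟩ := hc
      refine ⟨d, ?_⟩
      rw [← sub_eq_zero]
      apply hr j
      linear_combination hd
  exact this _

lemma aux_sepdata {G S : Type*} [Group G] [Fintype G] [DecidableEq G] [CommRing S]
    [MulSemiringAction G S] (A B : G → Fin 3 → S) (l : S)
    (h1 : ∀ σ, ∑ i, A σ i * B σ i = σ • l)
    (h2 : ∀ σ, σ ≠ 1 → ∑ i, A σ i * σ • B σ i = 0) (τ : G) :
    ∑ x : G → Fin 3, (∏ σ, A σ (x σ)) * τ • (∏ σ, B σ (x σ)) =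
      if τ = 1 then ∏ σ : G, σ • l else 0 := by
  have : ∑ x : G → Fin 3, (∏ σ, A σ (x σ)) * τ • (∏ σ, B σ (x σ)) =
      ∏ σ, ∑ i, A σ i * τ • B σ i := by
    rw [Finset.prod_univ_sum, Fintype.piFinset_univ]
    refine Finset.sum_congr rfl fun x _ => ?_
    rw [Finset.smul_prod', Finset.prod_mul_distrib]
  rw [this]
  split_ifs with h
  · subst h; simp [h1]
  · exact Finset.prod_eq_zero (Finset.mem_univ τ) (h2 τ h)

lemma aux_norm_mem {G S : Type*} [Group G] [Fintype G] [CommRing S]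
    [MulSemiringAction G S] (l : S) : (∏ σ : G, σ • l) ∈ fixedSubring G S := by
  intro τ
  rw [Finset.smul_prod']
  simp_rw [smul_smul]
  exact Fintype.prod_equiv (Equiv.mulLeft τ) _ _ (fun _ => rfl)

lemma aux_infinite {K G : Type*} [Field K] [Infinite K] [Finite G] (r s : G → K)
    (h : ∀ g, r g ≠ 0 ∨ s g ≠ 0) : ∃ w : K, ∀ g, r g + w * s g ≠ 0 := by
  have hfin : (⋃ g, {w : K | r g + w * s g = 0}).Finite := by
    apply Set.finite_iUnion
    intro g
    apply Set.Subsingleton.finite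
    intro w hw w' hw'
    by_contra hne
    have h1 : (w - w') * s g = 0 := by
      have e1 : r g + w * s g = 0 := hw
      have e2 : r g + w' * s g = 0 := hw'
      linear_combination e1 - e2
    have h2 : s g = 0 := (mul_eq_zero.1 h1).resolve_left (sub_ne_zero.2 hne)
    have h3 : r g = 0 := by
      have e1 : r g + w * s g = 0 := hw
      simpa [h2] using e1
    rcases h g with h | h
    · exact h h3
    · exact h h2
  obtain ⟨w, hw⟩ := hfin.exists_notMem
  refine ⟨w, fun g hg => hw (Set.mem_iUnion.2 ⟨g, hg⟩)⟩

/-- `x₁, x₂` is a regular sequence modulo `θ`. -/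
lemma aux_regseq {V : Type*} [CommRing V] [IsDomain V] (θ : MvPowerSeries (Fin 2) V)
    (hθ : constantCoeff θ ≠ 0) :
    (∀ c, θ ∣ X 0 * c → θ ∣ c) ∧
    (∀ c d e, X 1 * c = X 0 * d + θ * e → ∃ d' e', c = X 0 * d' + θ * e') := by
  have hX0 : (X 0 : MvPowerSeries (Fin 2) V) ≠ 0 := by
    intro h
    have := congrArg (coeff (Finsupp.single 0 1)) h
    simp [coeff_X] at this
  constructor
  · rintro c ⟨d, hd⟩
    obtain ⟨d', rfl⟩ := aux_X_prime θ d ⟨c, hd.symm⟩ hθ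
    refine ⟨d', mul_left_cancel₀ hX0 ?_⟩
    rw [hd]; ring
  · intro c d e h
    have h0 : constantCoeff e = 0 := by
      have := congrArg constantCoeff h
      simp only [map_add, map_mul, constantCoeff_X, zero_mul, zero_add] at this
      exact (mul_eq_zero.1 this.symm).resolve_left hθ
    obtain ⟨e1, e2, rfl⟩ := aux_decomp e h0
    obtain ⟨z, hz⟩ := aux_X01 (c - θ * e2) ⟨d + θ * e1, by linear_combination h⟩
    exact ⟨z, e2, by linear_combination hz⟩

/-- With `S = V[[x₁,x₂]]`, `G ⊆ GL₂(V)` finite without pseudo-reflections, `p ∤ |G|`,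
and `θ = π − g ∈ S^G` where `g ∈ (x₁,x₂)² ∩ S^G` (`g = 0` allowed): for all
`L₁, L₂ ∈ add_{S^G}(S)`, the element `θ` is a non-zerodivisor on
`Ext¹_{S^G}(L₁, L₂)`. -/
theorem theta_regular_on_ext_one
    (V : Type) [CommRing V] [IsDomain V] [IsDiscreteValuationRing V] [CharZero V]
    [IsAdicComplete (maximalIdeal V) V]
    (p : ℕ) (hp : p.Prime)
    [CharP (ResidueField V) p] [IsAlgClosed (ResidueField V)]
    (G : Subgroup (GL (Fin 2) V)) [Finite G] (hG : ¬ (p ∣ Nat.card G))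
    [MulSemiringAction G (MvPowerSeries (Fin 2) V)]
    (hlin : ∀ (σ : G) (i : Fin 2),
      σ • (X i : MvPowerSeries (Fin 2) V) =
        ∑ j : Fin 2, C (σ := Fin 2) (R := V) (((σ : GL (Fin 2) V) : Matrix (Fin 2) (Fin 2) V) j i) * X j)
    (hconst : ∀ (σ : G) (v : V),
      σ • (C (σ := Fin 2) (R := V) v) = C (σ := Fin 2) (R := V) v)
    (hpr : ∀ σ : G, σ ≠ 1 →
      ¬ Matrix.rank
          ((((σ : GL (Fin 2) V) : Matrix (Fin 2) (Fin 2) V)).map (residue V) - 1) ≤ 1)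
    (π : V) (hπ : maximalIdeal V = Ideal.span {π})
    (g : MvPowerSeries (Fin 2) V)
    (hg : g ∈ (Ideal.span {(X 0 : MvPowerSeries (Fin 2) V), X 1}) ^ 2)
    (θ : fixedSubring G (MvPowerSeries (Fin 2) V))
    (hθ : (θ : MvPowerSeries (Fin 2) V) = C (σ := Fin 2) (R := V) π - g)
    (L₁ L₂ : Type) [AddCommGroup L₁] [AddCommGroup L₂]
    [Module (fixedSubring G (MvPowerSeries (Fin 2) V)) L₁]
    [Module (fixedSubring G (MvPowerSeries (Fin 2) V)) L₂]
    [Module.Finite (fixedSubring G (MvPowerSeries (Fin 2) V)) L₁]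
    [Module.Finite (fixedSubring G (MvPowerSeries (Fin 2) V)) L₂]
    (h₁ : MemAdd (fixedSubring G (MvPowerSeries (Fin 2) V)) (MvPowerSeries (Fin 2) V) L₁)
    (h₂ : MemAdd (fixedSubring G (MvPowerSeries (Fin 2) V)) (MvPowerSeries (Fin 2) V) L₂) :
    ∀ x : ((Ext (fixedSubring G (MvPowerSeries (Fin 2) V))
        (ModuleCat (fixedSubring G (MvPowerSeries (Fin 2) V))) 1).obj
          (Opposite.op (ModuleCat.of (fixedSubring G (MvPowerSeries (Fin 2) V)) L₁))).obj
        (ModuleCat.of (fixedSubring G (MvPowerSeries (Fin 2) V)) L₂),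
      θ • x = 0 → x = 0 := by
  classical
  have : Fintype G := Fintype.ofFinite G
  -- the constant coefficient of θ is nonzero
  have hπ0 : π ≠ 0 := by
    rintro rfl
    apply IsDiscreteValuationRing.not_a_field V
    rw [hπ]; exact Ideal.span_singleton_eq_bot.2 rfl
  have hg0 : constantCoeff g = 0 := by
    have hle : Ideal.span {(X 0 : MvPowerSeries (Fin 2) V), X 1} ≤
        RingHom.ker (constantCoeff (σ := Fin 2) (R := V)) := by
      rw [Ideal.span_le]
      rintro _ (rfl | rfl) <;> simp [RingHom.mem_ker]
    exact hle (Ideal.pow_le_self two_ne_zero hg)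
  have hθ0 : constantCoeff (θ : MvPowerSeries (Fin 2) V) ≠ 0 := by
    rw [hθ, map_sub, hg0, constantCoeff_C, sub_zero]; exact hπ0
  have hθne : (θ : MvPowerSeries (Fin 2) V) ≠ 0 := by
    intro h; apply hθ0; rw [h, map_zero]
  obtain ⟨hR0, hR1⟩ := aux_regseq (θ : MvPowerSeries (Fin 2) V) hθ0
  have hθG : ∀ σ : G, σ • (θ : MvPowerSeries (Fin 2) V) = θ := θ.2
  -- choice of the second linear form
  have hdet : ∀ σ : G, IsUnit (((σ : GL (Fin 2) V) : Matrix (Fin 2) (Fin 2) V)).det := fun σ =>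
    (Matrix.isUnit_iff_isUnit_det _).1 (σ : GL (Fin 2) V).isUnit
  have : Infinite (ResidueField V) := IsAlgClosed.instInfinite
  obtain ⟨w, hw⟩ := aux_infinite (G := G)
    (fun σ => residue V (((σ : GL (Fin 2) V) : Matrix (Fin 2) (Fin 2) V) 1 0))
    (fun σ => residue V (((σ : GL (Fin 2) V) : Matrix (Fin 2) (Fin 2) V) 1 1)) (by
      intro σ
      by_contra hcon
      push Not at hcon
      have h1 := (residue_ne_zero_iff_isUnit _).2 (hdet σ)
      rw [Matrix.det_fin_two] at h1
      apply h1
      simp only [map_sub, map_mul]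
      rw [hcon.1, hcon.2]; ring)
  obtain ⟨v, rfl⟩ := residue_surjective w
  let ℓ : MvPowerSeries (Fin 2) V := X 0 + C v * X 1
  have hℓ : ∀ ρ : G, ∃ (α : MvPowerSeries (Fin 2) V) (β γ : V), γ * β = 1 ∧
      ρ • ℓ = α * X 0 + C β * X 1 := by
    intro ρ
    have hu : IsUnit (((ρ : GL (Fin 2) V) : Matrix (Fin 2) (Fin 2) V) 1 0 +
        v * ((ρ : GL (Fin 2) V) : Matrix (Fin 2) (Fin 2) V) 1 1) := by
      rw [← residue_ne_zero_iff_isUnit, map_add, map_mul]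
      exact hw ρ
    obtain ⟨γ, hγ⟩ := hu.exists_left_inv
    refine ⟨C (((ρ : GL (Fin 2) V) : Matrix (Fin 2) (Fin 2) V) 0 0) +
      C v * C (((ρ : GL (Fin 2) V) : Matrix (Fin 2) (Fin 2) V) 0 1), _, γ, hγ, ?_⟩
    simp only [ℓ]
    rw [smul_add, smul_mul', hconst, hlin, hlin, Fin.sum_univ_two, Fin.sum_univ_two, map_add,
      map_mul]
    ring
  -- pairwise regularity
  have hreg1 : ∀ (σ : G) (c : MvPowerSeries (Fin 2) V),
      (θ : MvPowerSeries (Fin 2) V) ∣ (σ • (X 0 : MvPowerSeries (Fin 2) V)) * c →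
      (θ : MvPowerSeries (Fin 2) V) ∣ c := by
    rintro σ c ⟨d, hd⟩
    have h1 : (X 0 : MvPowerSeries (Fin 2) V) * σ⁻¹ • c = θ * σ⁻¹ • d := by
      have := congrArg (fun z => σ⁻¹ • z) hd
      simp only [smul_mul', inv_smul_smul, hθG] at this
      exact this
    obtain ⟨d', hd'⟩ := hR0 _ ⟨_, h1⟩
    refine ⟨σ • d', ?_⟩
    have := congrArg (fun z => σ • z) hd'
    simp only [smul_mul', smul_inv_smul, hθG] at this
    exact this
  have hreg2 : ∀ (σ τ : G) (c d e : MvPowerSeries (Fin 2) V),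
      (τ • ℓ) * c = (σ • (X 0 : MvPowerSeries (Fin 2) V)) * d + θ * e →
      ∃ d' e' : MvPowerSeries (Fin 2) V, c = (σ • (X 0 : MvPowerSeries (Fin 2) V)) * d' + θ * e' := by
    intro σ τ c d e h
    have h1 : ((σ⁻¹ * τ) • ℓ) * σ⁻¹ • c =
        X 0 * σ⁻¹ • d + (θ : MvPowerSeries (Fin 2) V) * σ⁻¹ • e := by
      have := congrArg (fun z => σ⁻¹ • z) h
      simp only [smul_add, smul_mul', hθG, smul_smul] at this
      simpa using this
    obtain ⟨α, β, γ, hγ, hαβ⟩ := hℓ (σ⁻¹ * τ)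
    rw [hαβ] at h1
    have hγ' : (C γ * C β : MvPowerSeries (Fin 2) V) = 1 := by rw [← map_mul, hγ, map_one]
    obtain ⟨d', e', h2⟩ := hR1 (σ⁻¹ • c) (C γ * (σ⁻¹ • d - α * σ⁻¹ • c)) (C γ * σ⁻¹ • e) (by
      linear_combination (C γ) * h1 - (X 1 * σ⁻¹ • c) * hγ')
    refine ⟨σ • d', σ • e', ?_⟩
    have := congrArg (fun z => σ • z) h2
    simp only [smul_add, smul_mul', smul_inv_smul, hθG] at this
    exact this
  -- separability data
  have hX : ∀ σ : G, σ ≠ 1 → ∀ i : Fin 2, ∃ a b : MvPowerSeries (Fin 2) V,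
      X i = a * (X 0 - σ • X 0) + b * (X 1 - σ • X 1) := by
    intro σ hσ i
    have hd := aux_not_rank _ (hpr σ hσ)
    rw [Matrix.det_fin_two] at hd
    simp only [Matrix.sub_apply, Matrix.map_apply, Matrix.one_apply_eq, ne_eq, Matrix.one_apply,
      Fin.isValue, zero_ne_one, one_ne_zero, if_false, sub_zero, ← map_one (residue V), ← map_sub,
      ← map_mul] at hd
    rw [← ne_eq, residue_ne_zero_iff_isUnit] at hd
    obtain ⟨γ, hγ⟩ := hd.exists_left_inv
    generalize hM : ((σ : GL (Fin 2) V) : Matrix (Fin 2) (Fin 2) V) = M at hγ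
    have hγ' := congrArg (C (σ := Fin 2) (R := V)) hγ
    simp only [map_mul, map_sub, map_one] at hγ'
    rw [hlin, hlin, Fin.sum_univ_two, Fin.sum_univ_two, hM]
    fin_cases i
    · refine ⟨C γ * (1 - C (M 1 1)), C γ * C (M 1 0), ?_⟩
      simp only [Fin.zero_eta]
      linear_combination (-X 0) * hγ'
    · refine ⟨C γ * C (M 0 1), C γ * (1 - C (M 0 0)), ?_⟩
      simp only [Fin.mk_one]
      linear_combination (-X 1) * hγ'
  have hsep : ∀ (m₀ m₁ : V), ∃ A B : G → Fin 3 → MvPowerSeries (Fin 2) V,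
      (∀ σ, ∑ i, A σ i * B σ i = σ • (C m₀ * X 0 + C m₁ * X 1)) ∧
      (∀ σ, σ ≠ 1 → ∑ i, A σ i * σ • B σ i = 0) := by
    intro m₀ m₁
    have key : ∀ σ : G, ∃ A B : Fin 3 → MvPowerSeries (Fin 2) V,
        ∑ i, A i * B i = σ • (C m₀ * X 0 + C m₁ * X 1) ∧
        (σ ≠ 1 → ∑ i, A i * σ • B i = 0) := by
      intro σ
      by_cases hσ : σ = 1
      · refine ⟨![σ • (C m₀ * X 0 + C m₁ * X 1), 0, 0], ![1, 0, 0], ?_, fun h => absurd hσ h⟩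
        simp [Fin.sum_univ_three]
      · obtain ⟨a0, b0, h0⟩ := hX σ hσ 0
        obtain ⟨a1, b1, h1⟩ := hX σ hσ 1
        have hl : ∃ p r : MvPowerSeries (Fin 2) V,
            σ • (C m₀ * X 0 + C m₁ * X 1) = p * X 0 + r * X 1 := by
          rw [smul_add, smul_mul', smul_mul', hconst, hconst, hlin, hlin, Fin.sum_univ_two,
            Fin.sum_univ_two]
          exact ⟨C m₀ * C (((σ : GL (Fin 2) V) : Matrix (Fin 2) (Fin 2) V) 0 0) +
            C m₁ * C (((σ : GL (Fin 2) V) : Matrix (Fin 2) (Fin 2) V) 0 1),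
            C m₀ * C (((σ : GL (Fin 2) V) : Matrix (Fin 2) (Fin 2) V) 1 0) +
            C m₁ * C (((σ : GL (Fin 2) V) : Matrix (Fin 2) (Fin 2) V) 1 1), by ring⟩
        obtain ⟨p', r', hl⟩ := hl
        rw [hl]
        refine ⟨![p' * a0 + r' * a1, p' * b0 + r' * b1,
          - ((p' * a0 + r' * a1) * σ • X 0 + (p' * b0 + r' * b1) * σ • X 1)],
          ![X 0, X 1, 1], ?_, fun _ => ?_⟩
        · simp only [Fin.sum_univ_three, Matrix.cons_val]
          linear_combination (-p') * h0 - r' * h1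
        · simp only [Fin.sum_univ_three, Matrix.cons_val, smul_one]
          ring
    choose A B h using key
    exact ⟨A, B, fun σ => (h σ).1, fun σ => (h σ).2⟩
  obtain ⟨A, B, hA1, hA2⟩ := hsep 1 0
  obtain ⟨A', B', hA1', hA2'⟩ := hsep 1 v
  simp only [map_one, one_mul, map_zero, zero_mul, add_zero] at hA1 hA1'
  have hq1 : ∀ (σ : G) c, Ideal.Quotient.mk (Ideal.span {(θ : MvPowerSeries (Fin 2) V)})
      (σ • X 0) * c = 0 → c = 0 := by
    intro σ c hc
    obtain ⟨c, rfl⟩ := Ideal.Quotient.mk_surjective c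
    rw [← map_mul, Ideal.Quotient.eq_zero_iff_mem, Ideal.mem_span_singleton] at hc
    rw [Ideal.Quotient.eq_zero_iff_mem, Ideal.mem_span_singleton]
    exact hreg1 σ c hc
  have hq2 : ∀ (σ τ : G) c, Ideal.Quotient.mk (Ideal.span {(θ : MvPowerSeries (Fin 2) V)})
      (σ • X 0) ∣ Ideal.Quotient.mk (Ideal.span {(θ : MvPowerSeries (Fin 2) V)}) (τ • ℓ) * c →
      Ideal.Quotient.mk (Ideal.span {(θ : MvPowerSeries (Fin 2) V)}) (σ • X 0) ∣ c := by
    rintro σ τ c ⟨d, hd⟩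
    obtain ⟨c, rfl⟩ := Ideal.Quotient.mk_surjective c
    obtain ⟨d, rfl⟩ := Ideal.Quotient.mk_surjective d
    rw [← map_mul, ← map_mul, Ideal.Quotient.eq, Ideal.mem_span_singleton] at hd
    obtain ⟨e, he⟩ := hd
    obtain ⟨d', e', h⟩ := hreg2 σ τ c d e (by linear_combination he)
    refine ⟨Ideal.Quotient.mk _ d', ?_⟩
    rw [← map_mul, Ideal.Quotient.eq, Ideal.mem_span_singleton]
    exact ⟨e', by linear_combination h⟩
  have hS := aux_liftS θ (∏ σ : G, σ • (X 0 : MvPowerSeries (Fin 2) V)) (∏ σ : G, σ • ℓ)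
    (aux_norm_mem _) (aux_norm_mem _) _ _ _ _
    (aux_sepdata A B _ hA1 hA2) (aux_sepdata A' B' _ hA1' hA2')
    (by rw [map_prod]; exact aux_reg_prod _ hq1)
    (by
      rw [map_prod, map_prod]
      exact aux_dvd_left _ _ hq1 (fun σ => aux_dvd_right _ _ (hq2 σ)))
  refine aux_ext θ L₁ L₂ ?_ (aux_lift θ hS h₁ h₂)
  intro y hy
  obtain ⟨n, i₂, p₂, hp₂⟩ := aux_retract h₂
  have h0 : i₂ y = 0 := by
    ext1 k
    have := congrFun (congrArg i₂ hy) k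
    rw [map_smul, map_zero, Pi.smul_apply, Subring.smul_def, smul_eq_mul] at this
    exact (mul_eq_zero.1 this).resolve_left hθne
  rw [← hp₂ y, h0, map_zero]
end

section
/- Let B be a Noetherian local ring and let π ∈ B be an element such that πB is a prime ideal of B and π does not belong to any minimal prime of B. Then B is an integral domain. -/
/-- Let `B` be a Noetherian local ring and `π ∈ B` an element such that `πB` is a
prime ideal and `π` lies in no minimal prime of `B`.  Then `B` is an integral
domain. -/
theorem isDomain_of_principal_prime_not_in_minimal
    (B : Type) [CommRing B] [IsNoetherianRing B] [IsLocalRing B]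
    (π : B) (hprime : (Ideal.span {π}).IsPrime)
    (hmin : ∀ Q ∈ minimalPrimes B, π ∉ Q) :
    IsDomain B := by
  obtain ⟨Q, hQ, hle⟩ := Ideal.exists_minimalPrimes_le (I := (⊥ : Ideal B))
    (J := Ideal.span {π}) bot_le
  have hQp : Q.IsPrime := hQ.1.1
  have hπ : π ∉ Q := hmin Q hQ
  have hbot : Q = ⊥ := by
    refine Submodule.eq_bot_of_le_smul_of_le_jacobson_bot (Ideal.span {π}) Q
      (IsNoetherian.noetherian Q) ?_ ?_
    · intro x hx
      obtain ⟨y, rfl⟩ := Ideal.mem_span_singleton'.mp (hle hx)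
      have hy : y ∈ Q := (hQp.mem_or_mem hx).resolve_right hπ
      rw [mul_comm]
      exact Submodule.smul_mem_smul (Ideal.mem_span_singleton_self π) hy
    · rw [IsLocalRing.jacobson_eq_maximalIdeal _ bot_ne_top]
      exact IsLocalRing.le_maximalIdeal hprime.ne_top
  subst hbot
  exact IsDomain.of_bot_isPrime B
end
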